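/- arXiv:2306.05265 — 2 statements merged into one kernel-verified Lean document; each statement's English description precedes it below -/
import Mathlib

section
/- With the MDL hyperparameter calibration, the sum of the segment-wise marginal log-likelihoods equals the MDL criterion up to an explicit Stirling-remainder correction: Σ_{i=1}^{m+1} L_i = MDL(m) + Σ_{i=1}^{m+1} [ Ẽ((n_i + √n_i)/2) − Ẽ(√n_i / 2) ], where Ẽ(x) = ln Γ(x) − ((x − 1/2) ln x − x + (1/2) ln(2π) + R₄(x)). -/
/-!
The identity holds segment by segment. Writing `r = √nᵢ`, so that `nᵢ = r²`,
`(nᵢ + r)/2 = r(r + 1)/2` and `1/r + 1 = (r + 1)/r`, every logarithm in the segment term becomes a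
linear combination of `log r`, `log (r + 1)`, `log sᵢ`, `log T`, `log 2`, `log π` and
`log (max 1 m)`. The calibration `fᵢ` is such that `(K/2) log (1 + gᵢ)` absorbs the Stirling
remainder `ΔR₄` and cancels the `log (r + 1)` terms (`half_K_log_one_add_mdlG`). The remaining
terms are the MDL summand, with the penalty `log (max 1 m)` split evenly over the `m + 1` segments
(`segLogML_eq`), and summing over the segments gives the result.
-/

open Real
open scoped BigOperators

/-- `R₄(x) = 1/(12x) − 1/(360x³) + 1/(1260x⁵)`. -/
noncomputable def R4 (x : ℝ) : ℝ := 1 / (12 * x) - 1 / (360 * x ^ 3) + 1 / (1260 * x ^ 5)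

/-- `ΔR_{4,i} = R₄((n_i + √n_i)/2) − R₄(√n_i/2)`. -/
noncomputable def deltaR4 (ni : ℝ) : ℝ := R4 ((ni + Real.sqrt ni) / 2) - R4 (Real.sqrt ni / 2)

/-- The MDL calibration
`f_i = ((max(1,m))^{1/(m+1)} · n_i^{1/4} · T / (1/√n_i + 1)^{1/2})^{2/K} · exp((2/K)ΔR_{4,i})`. -/
noncomputable def mdlF (K m : ℕ) (T ni : ℝ) : ℝ :=
  ((max 1 m : ℕ) ^ ((1 : ℝ) / ((m : ℝ) + 1)) * ni ^ ((1 : ℝ) / 4) * T /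
      (1 / Real.sqrt ni + 1) ^ ((1 : ℝ) / 2)) ^ ((2 : ℝ) / (K : ℝ)) *
    Real.exp ((2 / (K : ℝ)) * deltaR4 ni)

/-- `g_i = f_i n_i − 1`. -/
noncomputable def mdlG (K m : ℕ) (T ni : ℝ) : ℝ := mdlF K m T ni * ni - 1

/-- Segment marginal log-likelihood under the MDL calibration (with `ν_i = √n_i`,
`s̲_i = s_i/√n_i`):
`L_i = −(n_i/2) ln(2π) − (K/2) ln(1 + g_i) + ln Γ((n_i + ν_i)/2) − ln Γ(ν_i/2)
       + (ν_i/2) ln(s̲_i/2) − ((n_i + ν_i)/2) ln((s̲_i + s_i)/2)`. -/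
noncomputable def segLogML (K m : ℕ) (T ni si : ℝ) : ℝ :=
  -(ni / 2) * Real.log (2 * π) - ((K : ℝ) / 2) * Real.log (1 + mdlG K m T ni) +
    Real.log (Real.Gamma ((ni + Real.sqrt ni) / 2)) -
    Real.log (Real.Gamma (Real.sqrt ni / 2)) +
    (Real.sqrt ni / 2) * Real.log (si / Real.sqrt ni / 2) -
    ((ni + Real.sqrt ni) / 2) * Real.log ((si / Real.sqrt ni + si) / 2)

/-- The MDL criterion
`MDL(m) = Σᵢ (−(n_i/2) ln(2π s_i/n_i) − n_i/2) − ln(max(1,m)) − (m+1) ln T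
          − ((K+1)/2) Σᵢ ln n_i`. -/
noncomputable def mdlCrit (K m : ℕ) (T : ℝ) (n : Fin (m + 1) → ℕ) (s : Fin (m + 1) → ℝ) : ℝ :=
  (∑ i, (-((n i : ℝ) / 2) * Real.log (2 * π * s i / (n i : ℝ)) - (n i : ℝ) / 2)) -
    Real.log ((max 1 m : ℕ) : ℝ) - ((m : ℝ) + 1) * Real.log T -
    (((K : ℝ) + 1) / 2) * ∑ i, Real.log ((n i : ℝ))

/-- `Ẽ(x) = ln Γ(x) − ((x − 1/2) ln x − x + (1/2) ln(2π) + R₄(x))`. -/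
noncomputable def stirlingError4 (x : ℝ) : ℝ :=
  Real.log (Real.Gamma x) -
    ((x - 1 / 2) * Real.log x - x + (1 / 2) * Real.log (2 * π) + R4 x)

/-- The calibrated penalty of one segment of size `r ^ 2`, in terms of `r = √nᵢ`. -/
lemma half_K_log_one_add_mdlG (K m : ℕ) (hK : 1 ≤ K) {T r : ℝ} (hT : 0 < T) (hr : 0 < r) :
    ((K : ℝ) / 2) * Real.log (1 + mdlG K m T (r ^ 2)) =
      Real.log ((max 1 m : ℕ) : ℝ) / ((m : ℝ) + 1) + Real.log r - Real.log (r + 1) / 2 +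
        Real.log T + deltaR4 (r ^ 2) + K * Real.log r := by
  have hK0 : (K : ℝ) ≠ 0 := by positivity
  have hM : (0 : ℝ) < ((max 1 m : ℕ) : ℝ) := by
    exact_mod_cast lt_of_lt_of_le Nat.one_pos (le_max_left 1 m)
  have hq : 1 / r + 1 = (r + 1) / r := by field_simp; ring
  have hr1 : 0 < r + 1 := by positivity
  have hA : 0 < ((max 1 m : ℕ) : ℝ) ^ ((1 : ℝ) / ((m : ℝ) + 1)) := Real.rpow_pos_of_pos hM _
  have hB : 0 < (r ^ 2) ^ ((1 : ℝ) / 4) := by positivity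
  have hC : 0 < ((r + 1) / r) ^ ((1 : ℝ) / 2) := by positivity
  have hD := div_pos (mul_pos (mul_pos hA hB) hT) hC
  have hlog : Real.log (1 + mdlG K m T (r ^ 2)) =
      2 / (K : ℝ) * (Real.log ((max 1 m : ℕ) : ℝ) / ((m : ℝ) + 1) + Real.log r -
        Real.log (r + 1) / 2 + Real.log T + deltaR4 (r ^ 2)) + 2 * Real.log r := by
    unfold mdlG mdlF
    rw [add_sub_cancel, Real.sqrt_sq hr.le, hq,
      Real.log_mul (mul_pos (Real.rpow_pos_of_pos hD _) (Real.exp_pos _)).ne' (by positivity),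
      Real.log_mul (Real.rpow_pos_of_pos hD _).ne' (Real.exp_pos _).ne', Real.log_exp,
      Real.log_rpow hD, Real.log_div (mul_pos (mul_pos hA hB) hT).ne' hC.ne',
      Real.log_mul (mul_pos hA hB).ne' hT.ne', Real.log_mul hA.ne' hB.ne',
      Real.log_rpow hM, Real.log_rpow (by positivity), Real.log_rpow (by positivity),
      Real.log_div hr1.ne' hr.ne', Real.log_pow]
    push_cast
    ring
  rw [hlog]
  field_simp

/-- The single-segment identity: the penalty `log (max 1 m)` is shared equally by the `m + 1`
segments. -/
lemma segLogML_eq (K m : ℕ) (hK : 1 ≤ K) {T ν σ : ℝ} (hT : 0 < T) (hν : 0 < ν) (hσ : 0 < σ) :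
    segLogML K m T ν σ =
      (-(ν / 2) * Real.log (2 * π * σ / ν) - ν / 2) -
        Real.log ((max 1 m : ℕ) : ℝ) / ((m : ℝ) + 1) - Real.log T -
        (((K : ℝ) + 1) / 2) * Real.log ν +
        (stirlingError4 ((ν + Real.sqrt ν) / 2) - stirlingError4 (Real.sqrt ν / 2)) := by
  obtain ⟨r, hr, rfl⟩ : ∃ r : ℝ, 0 < r ∧ ν = r ^ 2 :=
    ⟨Real.sqrt ν, Real.sqrt_pos.2 hν, (Real.sq_sqrt hν.le).symm⟩
  have hr1 : 0 < r + 1 := by positivity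
  have hs1 : (σ / r + σ) / 2 = σ * (r + 1) / r / 2 := by field_simp; ring
  have hs2 : (r ^ 2 + r) / 2 = r * (r + 1) / 2 := by ring
  have l1 : Real.log ((σ / r + σ) / 2) =
      Real.log σ + Real.log (r + 1) - Real.log r - Real.log 2 := by
    rw [hs1, Real.log_div (by positivity) two_ne_zero, Real.log_div (by positivity) hr.ne',
      Real.log_mul hσ.ne' hr1.ne']
  have l2 : Real.log ((r ^ 2 + r) / 2) = Real.log r + Real.log (r + 1) - Real.log 2 := by
    rw [hs2, Real.log_div (by positivity) two_ne_zero, Real.log_mul hr.ne' hr1.ne']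
  have l3 : Real.log (σ / r / 2) = Real.log σ - Real.log r - Real.log 2 := by
    rw [Real.log_div (by positivity) two_ne_zero, Real.log_div hσ.ne' hr.ne']
  have l4 : Real.log (r / 2) = Real.log r - Real.log 2 := Real.log_div hr.ne' two_ne_zero
  have l5 : Real.log (2 * π * σ / r ^ 2) = Real.log (2 * π) + Real.log σ - 2 * Real.log r := by
    rw [Real.log_div (by positivity) (by positivity), Real.log_mul (by positivity) hσ.ne',
      Real.log_pow]
    push_cast
    ring
  have l6 : Real.log (r ^ 2) = 2 * Real.log r := by
    rw [Real.log_pow]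
    push_cast
    ring
  unfold segLogML stirlingError4
  rw [half_K_log_one_add_mdlG K m hK hT hr]
  unfold deltaR4
  rw [Real.sqrt_sq hr.le, l1, l2, l3, l4, l5, l6]
  ring

/-- With the MDL hyperparameter calibration, the sum of the segment-wise marginal
log-likelihoods equals the MDL criterion up to an explicit Stirling-remainder correction:
`Σᵢ L_i = MDL(m) + Σᵢ (Ẽ((n_i + √n_i)/2) − Ẽ(√n_i/2))`. -/
theorem mdl_marginal_likelihood_exact (K m : ℕ) (hK : 1 ≤ K)
    (n : Fin (m + 1) → ℕ) (hn : ∀ i, 1 ≤ n i)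
    (s : Fin (m + 1) → ℝ) (hs : ∀ i, 0 < s i)
    (T : ℝ) (hT : T = ∑ i, (n i : ℝ)) :
    (∑ i, segLogML K m T (n i) (s i)) =
      mdlCrit K m T n s +
        ∑ i, (stirlingError4 (((n i : ℝ) + Real.sqrt (n i)) / 2) -
          stirlingError4 (Real.sqrt (n i) / 2)) := by
  have hn0 : ∀ i, (0 : ℝ) < n i := fun i => by exact_mod_cast hn i
  have hT0 : 0 < T := hT ▸ Finset.sum_pos (fun i _ => hn0 i) Finset.univ_nonempty
  have hm : (m : ℝ) + 1 ≠ 0 := by positivity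
  rw [Finset.sum_congr rfl fun i _ => segLogML_eq K m hK hT0 (hn0 i) (hs i)]
  unfold mdlCrit
  rw [Finset.sum_add_distrib, Finset.sum_sub_distrib, Finset.sum_sub_distrib,
    Finset.sum_sub_distrib, ← Finset.mul_sum]
  simp only [Finset.sum_const, Finset.card_univ, Fintype.card_fin, nsmul_eq_mul]
  push_cast
  rw [mul_div_cancel₀ _ hm]
end

section
/- Stirling series remainder bound with three Bernoulli terms: for every real x > 0, | ln Γ(x) − ( (x − 1/2) ln x − x + (1/2) ln(2π) + 1/(12x) − 1/(360x³) + 1/(1260x⁵) ) | ≤ 1/(1680 x⁷). -/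
open Real

/-!
Let `E x = log Γ(x) - ((x - 1/2) log x - x + (1/2) log (2π))` (`stirlingErr`), and let `S₀`, `S₁` be
the partial sums of the Stirling series with three and four terms (`stirlingCorr 0`,
`stirlingCorr 1`). The series envelops `E`: the proof shows `S₁ ≤ E ≤ S₀` on `(0, ∞)`, and `S₀ - S₁`
is exactly the claimed bound `1 / (1680 x⁷)`.

The functional equation of `Γ` gives `E x - E (x + 1) = (x + 1/2) log (1 + 1/x) - 1`. The function
`stepDefect c x = (E x - E (x + 1)) - (S_c x - S_c (x + 1))` tends to `0` at infinity together with
its derivative, and its second derivative is a rational function whose numerator has coefficients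
all of one sign: negative for `c = 0`, positive for `c = 1`. Integrating twice from infinity, the
defect has that same sign on `(0, ∞)`. Hence `n ↦ E (x + n) - S_c (x + n)` is monotone for `c = 0` and
antitone for `c = 1`. It tends to `0`, by Euler's limit formula for `log Γ` combined with Stirling's
formula for `n!`, so its value at `n = 0` is nonpositive, respectively nonnegative.
-/

open Filter Topology

/-- The first three terms of the Stirling series, together with `c` times the fourth. -/
noncomputable def stirlingCorr (c x : ℝ) : ℝ :=
  x⁻¹ / 12 - x⁻¹ ^ 3 / 360 + x⁻¹ ^ 5 / 1260 - c * x⁻¹ ^ 7 / 1680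

/-- The first derivative of `stirlingCorr c`. -/
noncomputable def stirlingCorr₁ (c x : ℝ) : ℝ :=
  -x⁻¹ ^ 2 / 12 + x⁻¹ ^ 4 / 120 - x⁻¹ ^ 6 / 252 + c * x⁻¹ ^ 8 / 240

/-- The second derivative of `stirlingCorr c`. -/
noncomputable def stirlingCorr₂ (c x : ℝ) : ℝ :=
  x⁻¹ ^ 3 / 6 - x⁻¹ ^ 5 / 30 + x⁻¹ ^ 7 / 42 - c * x⁻¹ ^ 9 / 30

/-- The error `log Γ(x) - ((x - 1/2) log x - x + (1/2) log (2π))` of the leading-order Stirling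
approximation. -/
noncomputable def stirlingErr (x : ℝ) : ℝ :=
  log (Gamma x) - ((x - 1 / 2) * log x - x + 1 / 2 * log (2 * π))

/-- The decrement over `[x, x + 1]` of `stirlingErr - stirlingCorr c`, with the decrement of
`stirlingErr` in closed form (see `stirlingErr_sub_stirlingErr_add_one`). -/
noncomputable def stepDefect (c x : ℝ) : ℝ :=
  (x + 1 / 2) * (log (x + 1) - log x) - 1 - (stirlingCorr c x - stirlingCorr c (x + 1))

/-- The first derivative of `stepDefect c`. -/
noncomputable def stepDefect₁ (c x : ℝ) : ℝ :=
  log (x + 1) - log x - (x⁻¹ + (x + 1)⁻¹) / 2 - (stirlingCorr₁ c x - stirlingCorr₁ c (x + 1))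

/-- The second derivative of `stepDefect c`; the logarithms have disappeared. -/
noncomputable def stepDefect₂ (c x : ℝ) : ℝ :=
  (x⁻¹ - (x + 1)⁻¹) ^ 2 / 2 - (stirlingCorr₂ c x - stirlingCorr₂ c (x + 1))

/-! ### Sign of a function from its derivatives and limits at infinity -/

lemma nonneg_of_deriv_nonpos {f f' : ℝ → ℝ} (hd : ∀ x, 0 < x → HasDerivAt f (f' x) x)
    (hneg : ∀ x, 0 < x → f' x ≤ 0) (hlim : Tendsto f atTop (𝓝 0)) {x : ℝ} (hx : 0 < x) :
    0 ≤ f x := by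
  have hanti : AntitoneOn f (Set.Ioi 0) :=
    antitoneOn_of_hasDerivWithinAt_nonpos (convex_Ioi 0)
      (fun y hy => (hd y hy).continuousAt.continuousWithinAt)
      (fun y hy => (hd y (interior_subset hy)).hasDerivWithinAt)
      (fun y hy => hneg y (interior_subset hy))
  refine le_of_tendsto hlim ?_
  filter_upwards [eventually_ge_atTop x] with y hy
  exact hanti hx (lt_of_lt_of_le hx hy) hy

lemma nonneg_of_second_deriv_nonneg {f f' f'' : ℝ → ℝ}
    (hd : ∀ x, 0 < x → HasDerivAt f (f' x) x) (hd' : ∀ x, 0 < x → HasDerivAt f' (f'' x) x)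
    (hpos : ∀ x, 0 < x → 0 ≤ f'' x) (hlim : Tendsto f atTop (𝓝 0))
    (hlim' : Tendsto f' atTop (𝓝 0)) {x : ℝ} (hx : 0 < x) : 0 ≤ f x := by
  refine nonneg_of_deriv_nonpos hd (fun y hy => ?_) hlim hx
  have := nonneg_of_deriv_nonpos (f := fun z => -f' z) (fun z hz => (hd' z hz).neg)
    (fun z hz => neg_nonpos.2 (hpos z hz)) (by simpa using hlim'.neg) hy
  linarith

/-! ### Derivatives -/

lemma hasDerivAt_inv_pow {x : ℝ} (hx : 0 < x) (n : ℕ) :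
    HasDerivAt (fun y : ℝ => y⁻¹ ^ n) (-(n * x⁻¹ ^ (n + 1))) x := by
  rcases n with _ | n
  · simpa using hasDerivAt_const x (1 : ℝ)
  · refine ((hasDerivAt_inv hx.ne').fun_pow (n + 1)).congr_deriv ?_
    simp only [Nat.add_sub_cancel]
    ring

lemma hasDerivAt_stirlingCorr (c : ℝ) {x : ℝ} (hx : 0 < x) :
    HasDerivAt (stirlingCorr c) (stirlingCorr₁ c x) x := by
  have h := (((hasDerivAt_inv_pow hx 1).div_const 12).sub
    ((hasDerivAt_inv_pow hx 3).div_const 360)).add ((hasDerivAt_inv_pow hx 5).div_const 1260)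
      |>.sub (((hasDerivAt_inv_pow hx 7).const_mul c).div_const 1680)
  refine (h.congr_deriv ?_).congr_of_eventuallyEq (.of_forall fun y => ?_)
  · simp only [stirlingCorr₁]; push_cast; ring
  · simp [stirlingCorr]

lemma hasDerivAt_stirlingCorr₁ (c : ℝ) {x : ℝ} (hx : 0 < x) :
    HasDerivAt (stirlingCorr₁ c) (stirlingCorr₂ c x) x := by
  have h := (((hasDerivAt_inv_pow hx 2).neg.div_const 12).add
    ((hasDerivAt_inv_pow hx 4).div_const 120)).sub ((hasDerivAt_inv_pow hx 6).div_const 252)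
      |>.add (((hasDerivAt_inv_pow hx 8).const_mul c).div_const 240)
  refine (h.congr_deriv ?_).congr_of_eventuallyEq (.of_forall fun y => ?_)
  · simp only [stirlingCorr₂]; push_cast; ring
  · simp [stirlingCorr₁]

lemma hasDerivAt_log_add_one_sub_log {x : ℝ} (hx : 0 < x) :
    HasDerivAt (fun y => log (y + 1) - log y) ((x + 1)⁻¹ - x⁻¹) x :=
  ((hasDerivAt_log (by positivity : x + 1 ≠ 0)).comp_add_const x 1).sub (hasDerivAt_log hx.ne')

lemma hasDerivAt_stepDefect (c : ℝ) {x : ℝ} (hx : 0 < x) :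
    HasDerivAt (stepDefect c) (stepDefect₁ c x) x := by
  have h := (((((hasDerivAt_id x).add_const (1 / 2)).mul
    (hasDerivAt_log_add_one_sub_log hx)).sub_const 1).sub
    ((hasDerivAt_stirlingCorr c hx).sub
      ((hasDerivAt_stirlingCorr c (by positivity : 0 < x + 1)).comp_add_const x 1)))
  refine h.congr_deriv ?_
  simp only [stepDefect₁, id]
  field_simp
  ring

lemma hasDerivAt_stepDefect₁ (c : ℝ) {x : ℝ} (hx : 0 < x) :
    HasDerivAt (stepDefect₁ c) (stepDefect₂ c x) x := by
  have h := ((hasDerivAt_log_add_one_sub_log hx).sub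
    (((hasDerivAt_inv hx.ne').add
      ((hasDerivAt_inv (by positivity : x + 1 ≠ 0)).comp_add_const x 1)).div_const 2)).sub
    ((hasDerivAt_stirlingCorr₁ c hx).sub
      ((hasDerivAt_stirlingCorr₁ c (by positivity : 0 < x + 1)).comp_add_const x 1))
  refine h.congr_deriv ?_
  simp only [stepDefect₂]
  field_simp
  ring

/-! ### Limits at infinity -/

lemma tendsto_stirlingCorr (c : ℝ) : Tendsto (stirlingCorr c) atTop (𝓝 0) := by
  have hcont : Continuous fun t : ℝ => t / 12 - t ^ 3 / 360 + t ^ 5 / 1260 - c * t ^ 7 / 1680 := by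
    fun_prop
  simpa using! (hcont.tendsto 0).comp tendsto_inv_atTop_zero

lemma tendsto_stirlingCorr₁ (c : ℝ) : Tendsto (stirlingCorr₁ c) atTop (𝓝 0) := by
  have hcont : Continuous fun t : ℝ =>
      -t ^ 2 / 12 + t ^ 4 / 120 - t ^ 6 / 252 + c * t ^ 8 / 240 := by
    fun_prop
  simpa using! (hcont.tendsto 0).comp tendsto_inv_atTop_zero

lemma tendsto_add_mul_log_one_add_div (a b : ℝ) :
    Tendsto (fun y : ℝ => (y + a) * log (1 + b / y)) atTop (𝓝 b) := by
  have h1 := tendsto_mul_log_one_add_div_atTop b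
  have h2 : Tendsto (fun y : ℝ => log (1 + b / y)) atTop (𝓝 0) := by
    have h3 : Tendsto (fun y : ℝ => 1 + b / y) atTop (𝓝 1) := by
      simpa using (tendsto_const_nhds (x := b)).div_atTop tendsto_id |>.const_add 1
    simpa using! (continuousAt_log one_ne_zero).tendsto.comp h3
  simpa [add_mul] using h1.add (h2.const_mul a)

lemma tendsto_stepDefect (c : ℝ) : Tendsto (stepDefect c) atTop (𝓝 0) := by
  have hC := tendsto_stirlingCorr c
  have h := ((tendsto_add_mul_log_one_add_div (1 / 2) 1).sub_const 1).sub
    (hC.sub (hC.comp (tendsto_atTop_add_const_right atTop 1 tendsto_id)))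
  simp only [sub_self] at h
  refine h.congr' ?_
  filter_upwards [eventually_gt_atTop 0] with y hy
  rw [stepDefect, ← log_div (by positivity) hy.ne', add_div, div_self hy.ne']
  rfl

lemma tendsto_stepDefect₁ (c : ℝ) : Tendsto (stepDefect₁ c) atTop (𝓝 0) := by
  have hC := tendsto_stirlingCorr₁ c
  have hs : Tendsto (fun y : ℝ => y + 1) atTop atTop :=
    tendsto_atTop_add_const_right atTop 1 tendsto_id
  have hl : Tendsto (fun y : ℝ => log (y + 1) - log y) atTop (𝓝 0) :=
    tendsto_log_comp_add_sub_log 1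
  have h := (hl.sub ((tendsto_inv_atTop_zero.add
    (tendsto_inv_atTop_zero.comp hs)).div_const 2)).sub (hC.sub (hC.comp hs))
  simpa using! h

/-! ### Sign of the step defect -/

lemma stepDefect₂_zero_nonpos {x : ℝ} (hx : 0 < x) : stepDefect₂ 0 x ≤ 0 := by
  have : stepDefect₂ 0 x = -(5 * x ^ 2 + 45 * x ^ 3 + 173 * x ^ 4 + 357 * x ^ 5 + 413 * x ^ 6 + 252 * x ^ 7 +
        63 * x ^ 8) / (210 * (x ^ 9 * (x + 1) ^ 9)) := by
    simp only [stepDefect₂, stirlingCorr₂]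
    field_simp
    ring
  rw [this, neg_div]
  exact neg_nonpos.2 (by positivity)

lemma stepDefect₂_one_nonneg {x : ℝ} (hx : 0 < x) : 0 ≤ stepDefect₂ 1 x := by
  have : stepDefect₂ 1 x = (7 + 63 * x + 247 * x ^ 2 + 543 * x ^ 3 + 709 * x ^ 4 + 525 * x ^ 5 +
        175 * x ^ 6) / (210 * (x ^ 9 * (x + 1) ^ 9)) := by
    simp only [stepDefect₂, stirlingCorr₂]
    field_simp
    ring
  rw [this]
  positivity

lemma stepDefect_zero_nonpos {x : ℝ} (hx : 0 < x) : stepDefect 0 x ≤ 0 := by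
  have := nonneg_of_second_deriv_nonneg (f := fun y => -stepDefect 0 y)
    (fun y hy => (hasDerivAt_stepDefect 0 hy).neg) (fun y hy => (hasDerivAt_stepDefect₁ 0 hy).neg)
    (fun y hy => neg_nonneg.2 (stepDefect₂_zero_nonpos hy))
    (by simpa using (tendsto_stepDefect 0).neg) (by simpa using (tendsto_stepDefect₁ 0).neg) hx
  linarith

lemma stepDefect_one_nonneg {x : ℝ} (hx : 0 < x) : 0 ≤ stepDefect 1 x :=
  nonneg_of_second_deriv_nonneg (fun _ => hasDerivAt_stepDefect 1)
    (fun _ => hasDerivAt_stepDefect₁ 1) (fun _ => stepDefect₂_one_nonneg)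
    (tendsto_stepDefect 1) (tendsto_stepDefect₁ 1) hx

/-! ### Behaviour of the Stirling error under unit shifts -/

lemma log_Gamma_add_one {y : ℝ} (hy : 0 < y) : log (Gamma (y + 1)) = log (Gamma y) + log y := by
  rw [Gamma_add_one hy.ne', log_mul hy.ne' (Gamma_pos_of_pos hy).ne', add_comm]

lemma stirlingErr_sub_stirlingErr_add_one {x : ℝ} (hx : 0 < x) :
    stirlingErr x - stirlingErr (x + 1) = (x + 1 / 2) * (log (x + 1) - log x) - 1 := by
  simp only [stirlingErr, log_Gamma_add_one hx]
  ring

/-- Euler's limit formula reduces `log Γ(x + n + 1)` to `x log n + log n!` up to `o(1)`, and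
Stirling's formula for `n!` supplies the constant `(1/2) log (2π)`. -/
lemma tendsto_stirlingErr_nat {x : ℝ} (hx : 0 < x) :
    Tendsto (fun n : ℕ => stirlingErr (x + n)) atTop (𝓝 0) := by
  rw [← tendsto_add_atTop_iff_nat 1]
  have hGamma := BohrMollerup.tendsto_log_gamma hx
  have hfact : Tendsto (fun n : ℕ => log (Stirling.stirlingSeq n)) atTop (𝓝 (log √π)) :=
    (continuousAt_log (by positivity)).tendsto.comp Stirling.tendsto_stirlingSeq_sqrt_pi
  have hlog := (tendsto_add_mul_log_one_add_div (x + 1 / 2) (x + 1)).comp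
    (tendsto_natCast_atTop_atTop (R := ℝ))
  have h := (((hGamma.const_sub (log (Gamma x))).add (hfact.sub_const (log √π))).sub
    (hlog.sub_const (x + 1)))
  simp only [sub_self, add_zero] at h
  refine h.congr' ?_
  filter_upwards [eventually_gt_atTop 0] with n hn
  have hn' : (0 : ℝ) < n := by exact_mod_cast hn
  have hsum := BohrMollerup.f_add_nat_eq (f := fun y => log (Gamma y))
    (fun {y} hy => log_Gamma_add_one hy) hx (n + 1)
  have hsplit : log (1 + (x + 1) / n) = log (x + (n + 1)) - log n := by
    rw [← log_div (by positivity) hn'.ne']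
    congr 1
    field_simp
    ring
  simp only [stirlingErr, hsum, BohrMollerup.logGammaSeq, Function.comp_apply,
    Stirling.log_stirlingSeq_formula, hsplit]
  rw [log_mul two_ne_zero hn'.ne', log_mul two_ne_zero pi_ne_zero,
    log_div hn'.ne' (exp_ne_zero 1), log_exp, log_sqrt pi_nonneg]
  push_cast
  ring

lemma tendsto_stirlingErr_sub_stirlingCorr (c : ℝ) {x : ℝ} (hx : 0 < x) :
    Tendsto (fun n : ℕ => stirlingErr (x + n) - stirlingCorr c (x + n)) atTop (𝓝 0) := by
  have hs : Tendsto (fun n : ℕ => x + n) atTop atTop :=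
    tendsto_atTop_add_const_left atTop x tendsto_natCast_atTop_atTop
  simpa using! (tendsto_stirlingErr_nat hx).sub ((tendsto_stirlingCorr c).comp hs)

lemma stirlingErr_sub_stirlingCorr_step (c : ℝ) {x : ℝ} (hx : 0 < x) (n : ℕ) :
    (stirlingErr (x + n) - stirlingCorr c (x + n)) -
      (stirlingErr (x + (n + 1 : ℕ)) - stirlingCorr c (x + (n + 1 : ℕ))) =
      stepDefect c (x + n) := by
  have h := stirlingErr_sub_stirlingErr_add_one (by positivity : 0 < x + n)
  push_cast
  rw [← add_assoc, stepDefect]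
  linarith

/-! ### Enveloping bounds -/

lemma stirlingErr_le {x : ℝ} (hx : 0 < x) : stirlingErr x ≤ stirlingCorr 0 x := by
  have hmono : Monotone fun n : ℕ => stirlingErr (x + n) - stirlingCorr 0 (x + n) :=
    monotone_nat_of_le_succ fun n => by
      linarith [stirlingErr_sub_stirlingCorr_step 0 hx n,
        stepDefect_zero_nonpos (by positivity : 0 < x + n)]
  simpa using hmono.ge_of_tendsto (tendsto_stirlingErr_sub_stirlingCorr 0 hx) 0

lemma le_stirlingErr {x : ℝ} (hx : 0 < x) : stirlingCorr 1 x ≤ stirlingErr x := by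
  have hanti : Antitone fun n : ℕ => stirlingErr (x + n) - stirlingCorr 1 (x + n) :=
    antitone_nat_of_succ_le fun n => by
      linarith [stirlingErr_sub_stirlingCorr_step 1 hx n,
        stepDefect_one_nonneg (by positivity : 0 < x + n)]
  simpa using hanti.le_of_tendsto (tendsto_stirlingErr_sub_stirlingCorr 1 hx) 0

/-- Stirling series remainder bound with three Bernoulli terms: for every real `x > 0`,
`|ln Γ(x) − ((x − 1/2) ln x − x + (1/2) ln(2π) + 1/(12x) − 1/(360x³) + 1/(1260x⁵))|
  ≤ 1/(1680 x⁷)`. -/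
theorem stirling_remainder_bound (x : ℝ) (hx : 0 < x) :
    |Real.log (Real.Gamma x) -
        ((x - 1 / 2) * Real.log x - x + (1 / 2) * Real.log (2 * π) +
          1 / (12 * x) - 1 / (360 * x ^ 3) + 1 / (1260 * x ^ 5))| ≤
      1 / (1680 * x ^ 7) := by
  have hupper := stirlingErr_le hx
  have hlower := le_stirlingErr hx
  have hpos : 0 < x⁻¹ ^ 7 := by positivity
  have e1 : 1 / (12 * x) = x⁻¹ / 12 := by field_simp
  have e3 : 1 / (360 * x ^ 3) = x⁻¹ ^ 3 / 360 := by field_simp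
  have e5 : 1 / (1260 * x ^ 5) = x⁻¹ ^ 5 / 1260 := by field_simp
  have e7 : 1 / (1680 * x ^ 7) = x⁻¹ ^ 7 / 1680 := by field_simp
  rw [e1, e3, e5, e7, abs_le]
  simp only [stirlingErr, stirlingCorr] at hupper hlower
  constructor <;> linarith
end
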